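/- Let H be a complex Hilbert space with grading operator ε, let F be a bounded operator with F² = 1 and Fε = −εF, let Ã be a unital ℂ-algebra, and let ρ : Ã → B(H) be a unital algebra homomorphism into even operators such that Fρ(a) − ρ(a)F is (n+1)-Schatten for every a ∈ Ã (n ≥ 1 an integer). Then for every 1 ≤ j ≤ n+1 and all a₀, a₁, …, a_j ∈ Ã, the operator ρ(a₀)dρ(a₁)⋯dρ(a_j) is (n+1)/j-Schatten; consequently Ω^j ⊆ S_{(n+1)/j}(H). -/

import Mathlib

open scoped ENNReal

noncomputable section

variable {H : Type*} [NormedAddCommGroup H] [InnerProductSpace ℂ H] [CompleteSpace H]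
variable {A : Type*} [Ring A] [Algebra ℂ A]

/-- The `n`-th singular value of a (compact) operator `T`, described via approximation
numbers: the distance from `T` to the operators of rank at most `n`. -/
def sval (T : H →L[ℂ] H) (n : ℕ) : ℝ :=
  sInf {c : ℝ | ∃ R : H →L[ℂ] H,
    Module.rank ℂ (LinearMap.range (R : H →ₗ[ℂ] H)) ≤ (n : Cardinal) ∧ c = ‖T - R‖}

/-- The `p`-Schatten norm `‖T‖_p = (Σ_n s_n(T)^p)^(1/p)`, valued in `ℝ≥0∞`. -/
def schattenNorm (p : ℝ) (T : H →L[ℂ] H) : ℝ≥0∞ :=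
  (∑' n : ℕ, ENNReal.ofReal (sval T n ^ p)) ^ (1 / p)

/-- `T` is a `p`-Schatten operator: compact with finite `p`-Schatten norm. -/
def MemSchatten (p : ℝ) (T : H →L[ℂ] H) : Prop :=
  IsCompactOperator (⇑T) ∧ schattenNorm p T < ⊤

/-- `dT = i(FT - TF)` for an even operator `T`. -/
def dOp (F T : H →L[ℂ] H) : H →L[ℂ] H := Complex.I • (F * T - T * F)

/-- The ordered product `f s * f (s+1) * ⋯ * f (s+k-1)` of operators. -/
def opList (f : ℕ → H →L[ℂ] H) (s k : ℕ) : H →L[ℂ] H := ((List.range' s k).map f).prod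

/-- `Ω^j`: the linear span in `B(H)` of the operators `ρ(a₀)dρ(a₁)⋯dρ(a_j)`. -/
def Omega (ρ : A →ₐ[ℂ] (H →L[ℂ] H)) (F : H →L[ℂ] H) (j : ℕ) : Submodule ℂ (H →L[ℂ] H) :=
  Submodule.span ℂ {x | ∃ a : Fin (j + 1) → A,
    x = ρ (a 0) *
      opList (fun k => dOp F (ρ (a ⟨k % (j + 1), Nat.mod_lt _ (Nat.succ_pos j)⟩))) 1 j}

/-!
The singular values `s_n` are approximation numbers, so adding or composing near-optimal finite-rank
approximants gives `s_{m+k}(S + T) ≤ s_m(S) + s_k(T)` and `s_{m+k}(S T) ≤ s_m(S) s_k(T)`. As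
`n ↦ s_n(T)` is antitone, `∑ s_n(T)^p` and `∑ s_{2n}(T)^p` converge together, and taking `m = k = n`
reduces the Schatten quasi-triangle and Hölder inequalities to those for sequences. A product of
`j` commutators in `S_p` is then in `S_{p/j}`.
-/

lemma summable_comp_mul_left_iff_of_antitone {f : ℕ → ℝ} (hf : Antitone f) (m : ℕ) [NeZero m] :
    Summable (fun n => f (m * n)) ↔ Summable f := by
  simpa using (summable_indicator_mod_iff_summable m 0 f).symm.trans
    (summable_indicator_mod_iff hf ((0 : ℕ) : ZMod m))

lemma summable_add_rpow {ι : Type*} {p : ℝ} (hp : 0 < p) {f g : ι → ℝ} (hf₀ : 0 ≤ f) (hg₀ : 0 ≤ g)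
    (hf : Summable fun i => f i ^ p) (hg : Summable fun i => g i ^ p) :
    Summable fun i => (f i + g i) ^ p := by
  have memℓp_iff {h : ι → ℝ} (h₀ : 0 ≤ h) :
      Memℓp h (ENNReal.ofReal p) ↔ Summable fun i => h i ^ p := by
    rw [memℓp_gen_iff (by rwa [ENNReal.toReal_ofReal hp.le]), ENNReal.toReal_ofReal hp.le]
    simp only [Real.norm_of_nonneg (h₀ _)]
  exact (memℓp_iff (add_nonneg hf₀ hg₀)).1 (((memℓp_iff hf₀).2 hf).add ((memℓp_iff hg₀).2 hg))

variable {E : Type*} [NormedAddCommGroup E] [InnerProductSpace ℂ E]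

section SingularValues

lemma sval_nonneg (T : E →L[ℂ] E) (n : ℕ) : 0 ≤ sval T n := by
  apply Real.sInf_nonneg
  rintro _ ⟨R, -, rfl⟩
  exact norm_nonneg _

lemma sval_le_norm_sub (T : E →L[ℂ] E) {R : E →L[ℂ] E} {n : ℕ}
    (hR : (R : E →ₗ[ℂ] E).rank ≤ n) : sval T n ≤ ‖T - R‖ := by
  refine csInf_le ⟨0, ?_⟩ ⟨R, hR, rfl⟩
  rintro _ ⟨Q, -, rfl⟩
  exact norm_nonneg _

lemma exists_rank_le_norm_sub_lt {T : E →L[ℂ] E} {n : ℕ} {c : ℝ} (hc : sval T n < c) :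
    ∃ R : E →L[ℂ] E, (R : E →ₗ[ℂ] E).rank ≤ n ∧ ‖T - R‖ < c := by
  obtain ⟨_, ⟨R, hR, rfl⟩, hRc⟩ := exists_lt_of_csInf_lt (by exact ⟨_, 0, by simp, rfl⟩) hc
  exact ⟨R, hR, hRc⟩

lemma sval_antitone (T : E →L[ℂ] E) : Antitone (sval T) := by
  intro m n hmn
  refine le_of_forall_gt fun c hc => ?_
  obtain ⟨R, hR, hRc⟩ := exists_rank_le_norm_sub_lt hc
  exact (sval_le_norm_sub T (hR.trans (by exact_mod_cast hmn))).trans_lt hRc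

lemma sval_add_le (S T : E →L[ℂ] E) (m k : ℕ) :
    sval (S + T) (m + k) ≤ sval S m + sval T k := by
  refine le_add_of_forall_lt fun s hs t ht => ?_
  obtain ⟨R, hR, hRs⟩ := exists_rank_le_norm_sub_lt hs
  obtain ⟨Q, hQ, hQt⟩ := exists_rank_le_norm_sub_lt ht
  have hRQ : ((R + Q : E →L[ℂ] E) : E →ₗ[ℂ] E).rank ≤ (m + k : ℕ) := by
    push_cast
    exact (LinearMap.rank_add_le _ _).trans (add_le_add hR hQ)
  calc sval (S + T) (m + k) ≤ ‖S + T - (R + Q)‖ := sval_le_norm_sub _ hRQ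
    _ = ‖(S - R) + (T - Q)‖ := by rw [add_sub_add_comm]
    _ ≤ ‖S - R‖ + ‖T - Q‖ := norm_add_le _ _
    _ ≤ s + t := add_le_add hRs.le hQt.le

lemma sval_mul_le (S T : E →L[ℂ] E) (m k : ℕ) :
    sval (S * T) (m + k) ≤ sval S m * sval T k := by
  refine le_mul_of_forall_lt₀ fun s hs t ht => ?_
  obtain ⟨R, hR, hRs⟩ := exists_rank_le_norm_sub_lt hs
  obtain ⟨Q, hQ, hQt⟩ := exists_rank_le_norm_sub_lt ht
  -- This approximant is the one for which the error factors as `(S - R) * (T - Q)`.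
  have hrank : ((R * (T - Q) + S * Q : E →L[ℂ] E) : E →ₗ[ℂ] E).rank ≤ (m + k : ℕ) := by
    push_cast
    exact (LinearMap.rank_add_le _ _).trans
      (add_le_add ((LinearMap.rank_comp_le_left _ _).trans hR)
        ((LinearMap.rank_comp_le_right _ _).trans hQ))
  calc sval (S * T) (m + k) ≤ ‖S * T - (R * (T - Q) + S * Q)‖ := sval_le_norm_sub _ hrank
    _ = ‖(S - R) * (T - Q)‖ := by congr 1; noncomm_ring
    _ ≤ ‖S - R‖ * ‖T - Q‖ := norm_mul_le _ _
    _ ≤ s * t := mul_le_mul hRs.le hQt.le (norm_nonneg _) ((sval_nonneg S m).trans hs.le)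

lemma summable_sval_rpow_of_le {p : ℝ} (hp : 0 < p) {T : E →L[ℂ] E} {m : ℕ} [NeZero m]
    {g : ℕ → ℝ} (hg : Summable fun n => g n ^ p) (h : ∀ n, sval T (m * n) ≤ g n) :
    Summable fun n => sval T n ^ p := by
  have hanti : Antitone fun n => sval T n ^ p := fun _ _ hmn =>
    Real.rpow_le_rpow (sval_nonneg T _) (sval_antitone T hmn) hp.le
  rw [← summable_comp_mul_left_iff_of_antitone hanti m]
  exact hg.of_nonneg_of_le (fun n => Real.rpow_nonneg (sval_nonneg T _) p)
    fun n => Real.rpow_le_rpow (sval_nonneg T _) (h n) hp.le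

end SingularValues

section Schatten

variable {p q r : ℝ} {S T : E →L[ℂ] E}

lemma memSchatten_iff_summable (hp : 0 < p) :
    MemSchatten p T ↔ IsCompactOperator T ∧ Summable fun n => sval T n ^ p := by
  have hnonneg (n : ℕ) : 0 ≤ sval T n ^ p := Real.rpow_nonneg (sval_nonneg T n) p
  rw [MemSchatten, schattenNorm, ENNReal.rpow_lt_top_iff_of_pos (one_div_pos.2 hp),
    lt_top_iff_ne_top]
  refine and_congr_right fun _ => ⟨fun h => ?_, Summable.tsum_ofReal_ne_top⟩
  simpa only [ENNReal.toReal_ofReal (hnonneg _)] using ENNReal.summable_toReal h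

namespace MemSchatten

lemma zero (hp : 0 < p) : MemSchatten p (0 : E →L[ℂ] E) := by
  have hsval (n : ℕ) : sval (0 : E →L[ℂ] E) n = 0 :=
    (sval_nonneg 0 n).antisymm' (by simpa using sval_le_norm_sub (0 : E →L[ℂ] E) (R := 0) (n := n))
  exact (memSchatten_iff_summable hp).2
    ⟨isCompactOperator_zero, by simp [hsval, Real.zero_rpow hp.ne']⟩

lemma add (hp : 0 < p) (hS : MemSchatten p S) (hT : MemSchatten p T) :
    MemSchatten p (S + T) := by
  rw [memSchatten_iff_summable hp] at *
  refine ⟨hS.1.add hT.1, summable_sval_rpow_of_le hp (m := 2)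
    (summable_add_rpow hp (sval_nonneg S) (sval_nonneg T) hS.2 hT.2) fun n => ?_⟩
  simpa only [two_mul] using sval_add_le S T n n

lemma mul_left (hp : 0 < p) (B : E →L[ℂ] E) (hT : MemSchatten p T) : MemSchatten p (B * T) := by
  rw [memSchatten_iff_summable hp] at *
  refine ⟨hT.1.clm_comp B, summable_sval_rpow_of_le hp (m := 1)
    (g := fun n => sval B 0 * sval T n) ?_ fun n => by simpa using sval_mul_le B T 0 n⟩
  simpa only [Real.mul_rpow (sval_nonneg B 0) (sval_nonneg T _)] using hT.2.mul_left _

lemma smul (hp : 0 < p) (c : ℂ) (hT : MemSchatten p T) : MemSchatten p (c • T) := by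
  simpa using hT.mul_left hp (c • 1)

lemma mul (hpqr : p.HolderTriple q r) (hS : MemSchatten p S) (hT : MemSchatten q T) :
    MemSchatten r (S * T) := by
  rw [memSchatten_iff_summable hpqr.pos] at hS
  rw [memSchatten_iff_summable hpqr.symm.pos] at hT
  rw [memSchatten_iff_summable hpqr.pos']
  refine ⟨hS.1.comp_clm T, summable_sval_rpow_of_le hpqr.pos' (m := 2)
    (Real.summable_Lr_of_Lp_Lq_of_nonneg hpqr (sval_nonneg S) (sval_nonneg T) hS.2 hT.2)
    fun n => ?_⟩
  simpa only [two_mul] using sval_mul_le S T n n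

lemma list_prod {ι : Type*} {e : ι → ℝ} {f : ι → E →L[ℂ] E} {l : List ι} (hl : l ≠ [])
    (he : ∀ i ∈ l, 0 < e i) (hf : ∀ i ∈ l, MemSchatten (e i) (f i)) :
    MemSchatten (l.map fun i => (e i)⁻¹).sum⁻¹ (l.map f).prod := by
  induction l with
  | nil => exact absurd rfl hl
  | cons i l ih =>
    rw [List.forall_mem_cons] at he hf
    rcases eq_or_ne l [] with rfl | hl'
    · simpa using hf.1
    have hsum : 0 < (l.map fun i => (e i)⁻¹).sum :=
      List.sum_pos _ (by simpa using he.2) (by simpa using hl')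
    simpa using hf.1.mul (.of_pos he.1 (inv_pos.2 hsum)) (ih hl' he.2 hf.2)

end MemSchatten

lemma memSchatten_opList (hp : 0 < p) {f : ℕ → E →L[ℂ] E} {s k : ℕ} (hk : k ≠ 0)
    (hf : ∀ i ∈ Set.Ico s (s + k), MemSchatten p (f i)) :
    MemSchatten (p / k) (opList f s k) := by
  have hprod := MemSchatten.list_prod (e := fun _ => p) (f := f) (l := List.range' s k)
    (by simpa using hk) (fun _ _ => hp) fun i hi => hf i (by simpa using hi)
  simpa [opList, div_eq_mul_inv, mul_comm] using hprod

lemma memSchatten_dOp (hp : 0 < p) {F : E →L[ℂ] E} (h : MemSchatten p (F * T - T * F)) :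
    MemSchatten p (dOp F T) :=
  h.smul hp Complex.I

/-- The Schatten class `S_p(E)`, as a linear subspace of `B(E)`. Exponents `0 < p < 1`, for which
the Schatten norm is only a quasi-norm, are allowed. -/
def schattenClass (p : ℝ) (hp : 0 < p) : Submodule ℂ (E →L[ℂ] E) where
  carrier := {T | MemSchatten p T}
  add_mem' := MemSchatten.add hp
  zero_mem' := MemSchatten.zero hp
  smul_mem' c _ := MemSchatten.smul hp c

end Schatten

theorem omega_subset_schatten_general {p : ℝ} (hp : 0 < p) (F : E →L[ℂ] E)
    (ρ : A →ₐ[ℂ] (E →L[ℂ] E)) (hS : ∀ a : A, MemSchatten p (F * ρ a - ρ a * F))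
    {j : ℕ} (hj : j ≠ 0) :
    (∀ a : Fin (j + 1) → A,
      MemSchatten (p / j)
        (ρ (a 0) *
          opList (fun k => dOp F (ρ (a ⟨k % (j + 1), Nat.mod_lt _ (Nat.succ_pos j)⟩))) 1 j)) ∧
    Omega ρ F j ≤ schattenClass (p / j) (by positivity) := by
  have hgen (a : Fin (j + 1) → A) : MemSchatten (p / j) (ρ (a 0) *
      opList (fun k => dOp F (ρ (a ⟨k % (j + 1), Nat.mod_lt _ (Nat.succ_pos j)⟩))) 1 j) :=
    .mul_left (by positivity) _ (memSchatten_opList hp hj fun _ _ => memSchatten_dOp hp (hS _))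
  refine ⟨hgen, Submodule.span_le.2 ?_⟩
  rintro _ ⟨a, rfl⟩
  exact hgen a

/-- Let `(H, ε)` be ℤ₂-graded, `F` bounded with `F² = 1`, `Fε = -εF`, `A` a unital
ℂ-algebra, and `ρ : A → B(H)` a unital homomorphism into even operators with
`Fρ(a) - ρ(a)F` being `(n+1)`-Schatten for all `a` (`n ≥ 1`).  Then for `1 ≤ j ≤ n+1` every
operator `ρ(a₀)dρ(a₁)⋯dρ(a_j)` is `(n+1)/j`-Schatten; consequently
`Ω^j ⊆ S_{(n+1)/j}(H)`. -/
theorem omega_subset_schatten (n : ℕ) (hn : 1 ≤ n) (ε F : H →L[ℂ] H)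
    (hε : IsSelfAdjoint ε) (hε2 : ε * ε = 1) (hF2 : F * F = 1) (hFε : F * ε = -(ε * F))
    (ρ : A →ₐ[ℂ] (H →L[ℂ] H)) (heven : ∀ a : A, ε * ρ a = ρ a * ε)
    (hS : ∀ a : A, MemSchatten ((n : ℝ) + 1) (F * ρ a - ρ a * F)) :
    ∀ j : ℕ, 1 ≤ j → j ≤ n + 1 →
      (∀ a : Fin (j + 1) → A,
        MemSchatten (((n : ℝ) + 1) / (j : ℝ))
          (ρ (a 0) *
            opList (fun k => dOp F (ρ (a ⟨k % (j + 1), Nat.mod_lt _ (Nat.succ_pos j)⟩))) 1 j)) ∧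
      (∀ x ∈ Omega ρ F j, MemSchatten (((n : ℝ) + 1) / (j : ℝ)) x) := by
  intro j hj _
  exact omega_subset_schatten_general (by positivity) F ρ hS (Nat.one_le_iff_ne_zero.1 hj)
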